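/- arXiv:math/9909109 — 3 statements merged into one kernel-verified Lean document; each statement's English description precedes it below -/
import Mathlib

section
/- Let ℓ ≥ 1 and let a, n, c : {1,…,ℓ} → ℝ be families of real numbers such that: n_i > 0 for all i; there is a nonempty subset I ⊆ {1,…,ℓ} with a_i < 0 for all i ∈ I and a_i ≥ 0 for all i ∉ I; there is an index i₀ ∈ I with −a_{i₀}/n_{i₀} ≥ −a_i/n_i for all i ∈ I; c_i ≥ 0 for all i ≠ i₀; and ∑_{i=1}^ℓ n_i·c_i < 0. Then ∑_{i=1}^ℓ a_i·c_i > 0. -/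
/-!
Since `n i₀ > 0`, it suffices to compare `n i₀ * ∑ a i * c i` with `a i₀ * ∑ n i * c i`, which is a
product of two negative numbers. The comparison holds term by term: the vector `n i₀ • a - a i₀ • n`
has nonnegative entries and vanishes at `i₀`, the only index where `c` may be negative.
-/

section OrderedRing

variable {ι R : Type*} [CommRing R] [LinearOrder R] {s : Finset ι} {i₀ : ι} {a n c : ι → R}

theorem mul_sum_mul_le_mul_sum_mul [IsOrderedRing R]
    (hcross : ∀ i ∈ s, a i₀ * n i ≤ a i * n i₀) (hc : ∀ i ∈ s, i ≠ i₀ → 0 ≤ c i) :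
    a i₀ * ∑ i ∈ s, n i * c i ≤ n i₀ * ∑ i ∈ s, a i * c i := by
  rw [Finset.mul_sum, Finset.mul_sum]
  refine Finset.sum_le_sum fun i hi => ?_
  obtain rfl | hne := eq_or_ne i i₀
  · exact (mul_left_comm _ _ _).le
  · calc
      a i₀ * (n i * c i) = a i₀ * n i * c i := (mul_assoc _ _ _).symm
      _ ≤ a i * n i₀ * c i := mul_le_mul_of_nonneg_right (hcross i hi) (hc i hi hne)
      _ = n i₀ * (a i * c i) := by ring

theorem stmt_1_general [IsStrictOrderedRing R] (hn₀ : 0 < n i₀) (ha₀ : a i₀ < 0)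
    (hcross : ∀ i ∈ s, a i₀ * n i ≤ a i * n i₀) (hc : ∀ i ∈ s, i ≠ i₀ → 0 ≤ c i)
    (hsum : ∑ i ∈ s, n i * c i < 0) :
    0 < ∑ i ∈ s, a i * c i := by
  refine (mul_pos_iff_of_pos_left hn₀).mp ?_
  calc
    0 < a i₀ * ∑ i ∈ s, n i * c i := mul_pos_of_neg_of_neg ha₀ hsum
    _ ≤ n i₀ * ∑ i ∈ s, a i * c i := mul_sum_mul_le_mul_sum_mul hcross hc

end OrderedRing

theorem mul_le_mul_of_neg_div_le_neg_div {K : Type*} [Field K] [LinearOrder K]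
    [IsStrictOrderedRing K] {a b m n : K} (hm : 0 < m) (hn : 0 < n) (hb : b ≤ 0)
    (h : a < 0 → -a / n ≤ -b / m) : b * n ≤ a * m := by
  obtain ha | ha := lt_or_ge a 0
  · simpa only [neg_mul, neg_le_neg_iff] using (div_le_div_iff₀ hn hm).mp (h ha)
  · exact (mul_nonpos_of_nonpos_of_nonneg hb hn.le).trans (mul_nonneg ha hm.le)

/-- Computational core of the proof of Prop. 2.1 (Fujiki-type extension criterion):
a finite-sum inequality for the coefficients of exceptional divisors. -/
theorem stmt_1 (ℓ : ℕ) (hℓ : 1 ≤ ℓ) (a n c : Fin ℓ → ℝ)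
    (hn : ∀ i, 0 < n i)
    (I : Finset (Fin ℓ)) (hI : I.Nonempty)
    (haI : ∀ i ∈ I, a i < 0) (haI' : ∀ i ∉ I, 0 ≤ a i)
    (i₀ : Fin ℓ) (hi₀ : i₀ ∈ I)
    (hmax : ∀ i ∈ I, - a i / n i ≤ - a i₀ / n i₀)
    (hc : ∀ i, i ≠ i₀ → 0 ≤ c i)
    (hsum : ∑ i, n i * c i < 0) :
    0 < ∑ i, a i * c i := by
  have hcross (i : Fin ℓ) : a i₀ * n i ≤ a i * n i₀ :=
    mul_le_mul_of_neg_div_le_neg_div (hn i₀) (hn i) (haI i₀ hi₀).le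
      fun ha => hmax i (not_imp_comm.mp (haI' i) ha.not_ge)
  exact stmt_1_general (hn i₀) (haI i₀ hi₀) (fun i _ => hcross i) (fun i _ => hc i) hsum
end

section
/- Let V be a finite-dimensional real normed vector space, q : V → ℝ a quadratic form with associated symmetric bilinear form B (so q(v) = B(v,v)), and α ∈ V with q(α) > 0. Assume q is negative definite on the hyperplane {v ∈ V : B(α,v) = 0}, i.e. q(v) < 0 for every nonzero v with B(α,v) = 0. Then for all real numbers c < 0 and M ≥ 0, the set {v ∈ V : q(v) = c and |B(α,v)| ≤ M} is compact. -/
/-!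
The function `v ↦ max (‖f v‖ ^ 2) (-Q v)` is continuous, homogeneous of degree `2` and, when `Q` is
negative definite on `ker f`, positive away from the origin: where `f v` vanishes, `-Q v` is
positive. By compactness of the unit sphere it dominates a multiple of `‖v‖ ^ 2`, so its sublevel
sets are compact. Where `c ≤ Q v` and `‖f v‖ ≤ M` it is at most `max (M ^ 2) (-c)`.
The theorem is the case `f = B α`.
-/

open Filter

section Homogeneous

variable {E : Type*} [NormedAddCommGroup E] [NormedSpace ℝ E] [ProperSpace E] {g : E → ℝ} {n : ℕ}

lemma exists_pos_forall_mul_norm_pow_le_of_homogeneous (hg : Continuous g) (hn : n ≠ 0)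
    (hhom : ∀ r : ℝ, 0 ≤ r → ∀ v, g (r • v) = r ^ n * g v) (hpos : ∀ v, v ≠ 0 → 0 < g v) :
    ∃ ε > 0, ∀ v, ε * ‖v‖ ^ n ≤ g v := by
  obtain ⟨ε, hε, hle⟩ := (isCompact_sphere (0 : E) 1).exists_forall_le' (a := 0) hg.continuousOn
    fun u hu => hpos u (ne_zero_of_mem_unit_sphere ⟨u, hu⟩)
  refine ⟨ε, hε, fun v => ?_⟩
  rcases eq_or_ne v 0 with rfl | hv
  · have hzero : g 0 = 0 := by simpa [hn] using hhom 0 le_rfl 0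
    simp [hzero, hn]
  · have hv' : ‖v‖ ≠ 0 := norm_ne_zero_iff.mpr hv
    calc ε * ‖v‖ ^ n = ‖v‖ ^ n * ε := mul_comm _ _
      _ ≤ ‖v‖ ^ n * g (‖v‖⁻¹ • v) := by
        gcongr
        exact hle _ (by simp [norm_smul, hv'])
      _ = g v := by rw [← hhom _ (norm_nonneg v), smul_inv_smul₀ hv']

lemma tendsto_cocompact_atTop_of_homogeneous (hg : Continuous g) (hn : n ≠ 0)
    (hhom : ∀ r : ℝ, 0 ≤ r → ∀ v, g (r • v) = r ^ n * g v) (hpos : ∀ v, v ≠ 0 → 0 < g v) :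
    Tendsto g (cocompact E) atTop := by
  obtain ⟨ε, hε, hle⟩ := exists_pos_forall_mul_norm_pow_le_of_homogeneous hg hn hhom hpos
  exact tendsto_atTop_mono hle <|
    ((tendsto_pow_atTop hn).comp tendsto_norm_cocompact_atTop).const_mul_atTop hε

end Homogeneous

lemma isCompact_setOf_le_of_tendsto_cocompact_atTop {X R : Type*} [TopologicalSpace X]
    [LinearOrder R] [NoMaxOrder R] [TopologicalSpace R] [ClosedIicTopology R] {g : X → R}
    (hg : Continuous g) (hlim : Tendsto g (cocompact X) atTop) (r : R) :
    IsCompact {x | g x ≤ r} := by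
  obtain ⟨K, hK, hsub⟩ := mem_cocompact'.mp (hlim.eventually_gt_atTop r)
  exact hK.of_isClosed_subset (isClosed_Iic.preimage hg) fun x hx => hsub (not_lt.mpr hx)

section QuadraticForm

variable {V W : Type*} [NormedAddCommGroup V] [NormedSpace ℝ V] [FiniteDimensional ℝ V]
  [NormedAddCommGroup W] [NormedSpace ℝ W]

lemma continuous_quadraticForm (Q : QuadraticForm ℝ V) : Continuous Q := by
  obtain ⟨B, rfl⟩ := LinearMap.BilinMap.toQuadraticMap_surjective Q
  exact B.toContinuousBilinearMap.continuous.clm_apply continuous_id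

lemma isCompact_setOf_max_norm_sq_neg_le (Q : QuadraticForm ℝ V) (f : V →ₗ[ℝ] W)
    (hneg : ∀ v, v ≠ 0 → f v = 0 → Q v < 0) (r : ℝ) :
    IsCompact {v | max (‖f v‖ ^ 2) (-Q v) ≤ r} := by
  have hproper : ProperSpace V := FiniteDimensional.proper_real V
  have hcont : Continuous fun v => max (‖f v‖ ^ 2) (-Q v) :=
    (f.continuous_of_finiteDimensional.norm.pow 2).max (continuous_quadraticForm Q).neg
  have hhom (r : ℝ) (hr : 0 ≤ r) (v : V) :
      max (‖f (r • v)‖ ^ 2) (-Q (r • v)) = r ^ 2 * max (‖f v‖ ^ 2) (-Q v) := by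
    rw [map_smul, norm_smul_of_nonneg hr, Q.map_smul, mul_max_of_nonneg _ _ (sq_nonneg r), mul_pow,
      ← sq, smul_eq_mul, mul_neg]
  have hpos (v : V) (hv : v ≠ 0) : 0 < max (‖f v‖ ^ 2) (-Q v) := by
    by_cases hfv : f v = 0
    · exact lt_max_of_lt_right (neg_pos.mpr (hneg v hv hfv))
    · exact lt_max_of_lt_left (pow_pos (norm_pos_iff.mpr hfv) 2)
  exact isCompact_setOf_le_of_tendsto_cocompact_atTop hcont
    (tendsto_cocompact_atTop_of_homogeneous hcont two_ne_zero hhom hpos) r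

theorem stmt_5_general (Q : QuadraticForm ℝ V) (f : V →ₗ[ℝ] W)
    (hneg : ∀ v, v ≠ 0 → f v = 0 → Q v < 0) {s : Set ℝ} (hs : IsClosed s) (hbdd : BddBelow s)
    (M : ℝ) : IsCompact {v | Q v ∈ s ∧ ‖f v‖ ≤ M} := by
  obtain ⟨c, hc⟩ := hbdd
  have hclosed : IsClosed {v | Q v ∈ s ∧ ‖f v‖ ≤ M} :=
    (hs.preimage (continuous_quadraticForm Q)).inter
      (isClosed_le f.continuous_of_finiteDimensional.norm continuous_const)
  refine (isCompact_setOf_max_norm_sq_neg_le Q f hneg (max (M ^ 2) (-c))).of_isClosed_subset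
    hclosed fun v ⟨hQv, hfv⟩ => ?_
  exact max_le_max (pow_le_pow_left₀ (norm_nonneg _) hfv 2) (neg_le_neg (hc hQv))

end QuadraticForm

/-- Compactness core of the proof of Cor. 3.4: if a symmetric bilinear form `B` is
positive on `α` and negative definite on the orthogonal complement of `α`, then for
`c < 0` and `M ≥ 0` the set of vectors `v` with `B v v = c` and `|B α v| ≤ M`
is compact. -/
theorem stmt_5 {V : Type*} [NormedAddCommGroup V] [NormedSpace ℝ V]
    [FiniteDimensional ℝ V]
    (B : V →ₗ[ℝ] V →ₗ[ℝ] ℝ) (hsymm : ∀ x y : V, B x y = B y x)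
    (α : V) (hα : 0 < B α α)
    (hneg : ∀ v : V, v ≠ 0 → B α v = 0 → B v v < 0)
    (c M : ℝ) (hc : c < 0) (hM : 0 ≤ M) :
    IsCompact {v : V | B v v = c ∧ |B α v| ≤ M} :=
  stmt_5_general (LinearMap.BilinMap.toQuadraticMap B) (B α) hneg isClosed_singleton
    bddBelow_singleton M
end

section
/- Let V be a finite-dimensional real normed vector space, q : V → ℝ a quadratic form with associated symmetric bilinear form B (so q(v) = B(v,v)), and α ∈ V with q(α) > 0. Assume q is negative definite on the hyperplane {v ∈ V : B(α,v) = 0}, i.e. q(v) < 0 for every nonzero v with B(α,v) = 0. Let L ⊆ V be an additive subgroup that is discrete (every point of L has a neighborhood in V containing no other point of L). Then for all real numbers c < 0 and M ≥ 0, the set {v ∈ L : q(v) = c and |B(α,v)| ≤ M} is finite. -/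
/-! Write `Q v = B v v` and `f = B α`. On the unit sphere `max (-Q v) ‖f v‖` is positive, because `Q`
is negative definite on `ker f`; by compactness it is at least some `ε > 0`. Rescaling, every `v`
satisfies `ε ‖v‖² ≤ -Q v` or `ε ‖v‖ ≤ ‖f v‖`, so a lower bound on `Q` and an upper bound on `‖f‖`
together confine `v` to a ball, and a discrete subgroup has only finitely many points in a ball. -/

theorem continuous_quadraticForm_s6 {𝕜 E : Type*} [NontriviallyNormedField 𝕜] [CompleteSpace 𝕜]
    [NormedAddCommGroup E] [NormedSpace 𝕜 E] [FiniteDimensional 𝕜 E] (Q : QuadraticForm 𝕜 E) :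
    Continuous Q := by
  obtain ⟨B, rfl⟩ := LinearMap.BilinMap.toQuadraticMap_surjective Q
  exact B.toContinuousBilinearMap.continuous.clm_apply continuous_id

section NegDefOnKer

variable {V W : Type*} [NormedAddCommGroup V] [NormedSpace ℝ V] [FiniteDimensional ℝ V]
  [NormedAddCommGroup W] [NormedSpace ℝ W]

theorem exists_pos_le_neg_or_le_norm_of_negDef_ker {Q : QuadraticForm ℝ V} {f : V →ₗ[ℝ] W}
    (hneg : ∀ v, v ≠ 0 → f v = 0 → Q v < 0) :
    ∃ ε > 0, ∀ v, ε * ‖v‖ ^ 2 ≤ -Q v ∨ ε * ‖v‖ ≤ ‖f v‖ := by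
  have hcont : Continuous fun v => max (-Q v) ‖f v‖ :=
    (continuous_quadraticForm_s6 Q).neg.max f.continuous_of_finiteDimensional.norm
  have hpos : ∀ u ∈ Metric.sphere (0 : V) 1, 0 < max (-Q u) ‖f u‖ := by
    intro u hu
    by_cases hfu : f u = 0
    · exact lt_max_of_lt_left (neg_pos.mpr (hneg u (ne_zero_of_mem_unit_sphere ⟨u, hu⟩) hfu))
    · exact lt_max_of_lt_right (norm_pos_iff.mpr hfu)
  obtain ⟨ε, hε, hle⟩ :=
    (isCompact_sphere (0 : V) 1).exists_forall_le' hcont.continuousOn hpos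
  refine ⟨ε, hε, fun v => ?_⟩
  rcases eq_or_ne v 0 with rfl | hv
  · simp
  obtain ⟨u, hu, hvu⟩ : ∃ u : V, ‖u‖ = 1 ∧ v = ‖v‖ • u :=
    ⟨‖v‖⁻¹ • v, norm_smul_inv_norm hv, (smul_inv_smul₀ (norm_ne_zero_iff.mpr hv) v).symm⟩
  refine (le_max_iff.mp (hle u (mem_sphere_zero_iff_norm.mpr hu))).imp (fun hQ => ?_) fun hf => ?_
  · calc ε * ‖v‖ ^ 2 ≤ -Q u * ‖v‖ ^ 2 := by gcongr
      _ = -Q (‖v‖ • u) := by rw [QuadraticMap.map_smul, smul_eq_mul]; ring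
      _ = -Q v := by rw [← hvu]
  · calc ε * ‖v‖ ≤ ‖f u‖ * ‖v‖ := by gcongr
      _ = ‖f (‖v‖ • u)‖ := by rw [map_smul, norm_smul, norm_norm, mul_comm]
      _ = ‖f v‖ := by rw [← hvu]

theorem isBounded_setOf_le_and_norm_le_of_negDef_ker {Q : QuadraticForm ℝ V} {f : V →ₗ[ℝ] W}
    (hneg : ∀ v, v ≠ 0 → f v = 0 → Q v < 0) (c M : ℝ) :
    Bornology.IsBounded {v : V | c ≤ Q v ∧ ‖f v‖ ≤ M} := by
  obtain ⟨ε, hε, hgrowth⟩ := exists_pos_le_neg_or_le_norm_of_negDef_ker hneg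
  refine isBounded_iff_forall_norm_le.mpr ⟨max √(-c / ε) (M / ε), ?_⟩
  rintro v ⟨hc, hM⟩
  refine le_max_iff.mpr ((hgrowth v).imp (fun hQ => ?_) fun hf => ?_)
  · exact Real.le_sqrt_of_sq_le ((le_div_iff₀' hε).mpr (hQ.trans (neg_le_neg hc)))
  · exact (le_div_iff₀' hε).mpr (hf.trans hM)

end NegDefOnKer

theorem isDiscrete_of_forall_exists_mem_nhds {X : Type*} [TopologicalSpace X] {s : Set X}
    (h : ∀ x ∈ s, ∃ U ∈ nhds x, ∀ y ∈ s, y ∈ U → y = x) : IsDiscrete s := by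
  refine isDiscrete_iff_nhdsWithin.mpr fun x hx => le_antisymm ?_ (pure_le_nhdsWithin hx)
  obtain ⟨U, hU, hUx⟩ := h x hx
  exact Filter.le_pure_iff.mpr
    (mem_nhdsWithin_iff_exists_mem_nhds_inter.mpr ⟨U, hU, fun y hy => hUx y hy.2 hy.1⟩)

theorem finite_inter_addSubgroup_of_isBounded {G : Type*} [NormedAddCommGroup G] [ProperSpace G]
    {L : AddSubgroup G} (hL : IsDiscrete (L : Set G)) {s : Set G} (hs : Bornology.IsBounded s) :
    (s ∩ L).Finite :=
  have : DiscreteTopology L := hL.to_subtype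
  Metric.finite_isBounded_inter_isClosed hL hs L.isClosed_of_discrete

theorem stmt_6_general {V W : Type*} [NormedAddCommGroup V] [NormedSpace ℝ V]
    [FiniteDimensional ℝ V] [NormedAddCommGroup W] [NormedSpace ℝ W]
    {Q : QuadraticForm ℝ V} {f : V →ₗ[ℝ] W} (hneg : ∀ v, v ≠ 0 → f v = 0 → Q v < 0)
    {L : AddSubgroup V} (hL : IsDiscrete (L : Set V)) (c M : ℝ) :
    {v : V | v ∈ L ∧ c ≤ Q v ∧ ‖f v‖ ≤ M}.Finite :=
  (finite_inter_addSubgroup_of_isBounded hL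
    (isBounded_setOf_le_and_norm_le_of_negDef_ker hneg c M)).subset fun _ hv => ⟨hv.2, hv.1⟩

/-- Lattice-theoretic core of the proof of Cor. 3.4: with `B` as in the compactness
statement and `L` a discrete additive subgroup, the set of lattice vectors `v ∈ L`
with `B v v = c < 0` and `|B α v| ≤ M` is finite. -/
theorem stmt_6 {V : Type*} [NormedAddCommGroup V] [NormedSpace ℝ V]
    [FiniteDimensional ℝ V]
    (B : V →ₗ[ℝ] V →ₗ[ℝ] ℝ) (hsymm : ∀ x y : V, B x y = B y x)
    (α : V) (hα : 0 < B α α)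
    (hneg : ∀ v : V, v ≠ 0 → B α v = 0 → B v v < 0)
    (L : AddSubgroup V)
    (hL : ∀ x ∈ L, ∃ U ∈ nhds x, ∀ y ∈ L, y ∈ U → y = x)
    (c M : ℝ) (hc : c < 0) (hM : 0 ≤ M) :
    {v : V | v ∈ L ∧ B v v = c ∧ |B α v| ≤ M}.Finite := by
  have hfin := stmt_6_general (Q := LinearMap.BilinMap.toQuadraticMap B) hneg
    (isDiscrete_of_forall_exists_mem_nhds hL) c M
  exact hfin.subset fun v ⟨hvL, hvc, hvM⟩ => ⟨hvL, hvc.ge, hvM⟩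
end
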